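/- arXiv:1907.13247 — 6 statements merged into one kernel-verified Lean document; each statement's English description precedes it below -/
import Mathlib

section
/- Let N ≥ k ≥ 2 and d ≥ 2 be integers with k ≥ 3 or d ≥ 3, and set r = 2N+2−k, s = k−1, t = (k−1)(N+1). Then (k−1)·r − (N−k+1)·s − t = 0, (d−1)·t > 0, and for every coordinate index 1 ≤ m ≤ N and every monomial x₁^{i₁}⋯x_N^{i_N} having nonzero coefficient in the m-th coordinate polynomial f_m of the generalized Hénon map f_P, the conjugation weight e_m(i) := w_m − Σ_{j=1}^{N} i_j·w_j + (d − Σ_j i_j)·t is strictly positive. (By the Hilbert–Mumford numerical criterion, this is the statement that the homogenization of f_P is SL_{N+1}-unstable.) -/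
open MvPolynomial

/-!
A monomial of `f m` is either the linear one, `x_{m+1}` (or `x_1` when `m = N`), or a monomial of
degree `D ≤ d` in the variables `x_k, …, x_N` coming from `P (m+1)`, with `m ≥ k`.

* The linear monomial `x_n` has weight `w_m - w_n + (d-1)t`. For `m < N` one has `w_m ≥ w_{m+1}`,
  so this is at least `(d-1)t > 0`. For `m = N` it equals
  `-(s+r) + (d-1)t = (d-1)(k-1)(N+1) - (2N+1)`, and `(d-1)(k-1) ≥ 2` because `k ≥ 3` or `d ≥ 3`.
  This last monomial is the only place where that hypothesis matters.
* A monomial of `P (m+1)` of degree `D` has weight `s(D-1) + (d-D)t`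
  (`high_variable_weight`), which is positive for `0 ≤ D ≤ d` since `0 < s < t` and `d ≥ 2`
  (`nonlinear_weight_pos`).
-/

theorem eq_single_of_coeff_C_mul_X_ne_zero {K : Type*} [Field K] {c : K} {n : ℕ} {i : ℕ →₀ ℕ}
    (h : coeff i (C c * X n) ≠ 0) : i = Finsupp.single n 1 := by
  by_contra hne
  apply h
  rw [coeff_C_mul, coeff_X, if_neg (Ne.symm hne), mul_zero]

/-- The weight of the linear monomial `x_n` in a coordinate of weight `a`. -/
theorem linear_weight {N n : ℕ} (hn : n ∈ Finset.Icc 1 N) (w : ℕ → ℤ) (a d t : ℤ) :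
    a - (∑ j ∈ Finset.Icc 1 N, ((Finsupp.single n 1 : ℕ →₀ ℕ) j : ℤ) * w j) +
      (d - ∑ j ∈ Finset.Icc 1 N, ((Finsupp.single n 1 : ℕ →₀ ℕ) j : ℤ)) * t =
    a - w n + (d - 1) * t := by
  have h1 : ∑ j ∈ Finset.Icc 1 N, ((Finsupp.single n 1 : ℕ →₀ ℕ) j : ℤ) * w j = w n := by
    rw [Finset.sum_eq_single_of_mem n hn]
    · simp
    · intro j _ hj
      simp [Finsupp.single_eq_of_ne hj]
  have h2 : ∑ j ∈ Finset.Icc 1 N, ((Finsupp.single n 1 : ℕ →₀ ℕ) j : ℤ) = 1 := by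
    rw [Finset.sum_eq_single_of_mem n hn]
    · simp
    · intro j _ hj
      simp [Finsupp.single_eq_of_ne hj]
  rw [h1, h2]

/-- A monomial of degree `D` all of whose variables have weight `-s`, in a coordinate that also
has weight `-s`, has conjugation weight `s(D-1) + (d-D)t`. -/
theorem high_variable_weight {N : ℕ} (i : ℕ →₀ ℕ) (w : ℕ → ℤ) (d s t : ℤ)
    (hsupp : ∀ j ∈ i.support, j ∈ Finset.Icc 1 N ∧ w j = -s) :
    -s - (∑ j ∈ Finset.Icc 1 N, (i j : ℤ) * w j) +
      (d - ∑ j ∈ Finset.Icc 1 N, (i j : ℤ)) * t =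
    s * ((i.degree : ℤ) - 1) + (d - i.degree) * t := by
  have hdeg : ∑ j ∈ Finset.Icc 1 N, (i j : ℤ) = i.degree := by
    rw [Finsupp.degree_apply, Nat.cast_sum]
    refine (Finset.sum_subset (fun j hj => (hsupp j hj).1) fun j _ hj => ?_).symm
    simpa using hj
  have hwt : ∑ j ∈ Finset.Icc 1 N, (i j : ℤ) * w j = i.degree * -s := by
    rw [← hdeg, Finset.sum_mul]
    refine Finset.sum_congr rfl fun j _ => ?_
    by_cases hj : j ∈ i.support
    · rw [(hsupp j hj).2]
    · simp [Finsupp.notMem_support_iff.mp hj]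
  rw [hwt, hdeg]
  ring

theorem nonlinear_weight_pos {D d s t : ℤ} (hD : 0 ≤ D) (hDd : D ≤ d) (hd : 2 ≤ d)
    (hs : 0 < s) (hst : s < t) : 0 < s * (D - 1) + (d - D) * t := by
  rcases hDd.lt_or_eq with h | rfl
  · -- Here `d - D ≥ 1`, so the weight is at least `s * (D - 1) + t ≥ t - s`.
    have h1 : 0 ≤ (d - D - 1) * t := mul_nonneg (by linarith) (by linarith)
    nlinarith [mul_nonneg hs.le hD]
  · nlinarith

/-- **Instability of generalized Hénon maps for `k ≥ 3` or `d ≥ 3`.**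
Let `N ≥ k ≥ 2`, `d ≥ 2` with `k ≥ 3` or `d ≥ 3`, and set `r = 2N+2-k`, `s = k-1`,
`t = (k-1)(N+1)`.  Then `(k-1)r - (N-k+1)s - t = 0`, `(d-1)t > 0`, and for every coordinate
`1 ≤ m ≤ N` and every monomial `x₁^{i₁} ⋯ x_N^{i_N}` with nonzero coefficient in the `m`-th
coordinate polynomial `f m` of the generalized Hénon map, the conjugation weight
`e_m(i) = w_m - ∑ i_j w_j + (d - ∑ i_j) t` is strictly positive. -/
theorem henon_unstable_weights {K : Type*} [Field K] [CharZero K]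
    (N k d : ℕ) (hk2 : 2 ≤ k) (hkN : k ≤ N) (hd2 : 2 ≤ d) (hkd : 3 ≤ k ∨ 3 ≤ d)
    (b : ℕ → K) (hb : ∀ j, 1 ≤ j → j ≤ N → b j ≠ 0)
    (P : ℕ → MvPolynomial ℕ K)
    (hPvars : ∀ i, k ≤ i → i ≤ N → ∀ j ∈ (P (i + 1)).vars, k ≤ j ∧ j ≤ i)
    (hPdeg : ∀ i, k ≤ i → i ≤ N → (P (i + 1)).totalDegree ≤ d)
    (hPmax : ∃ i, k ≤ i ∧ i ≤ N ∧ (P (i + 1)).totalDegree = d)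
    (f : ℕ → MvPolynomial ℕ K)
    (hf1 : ∀ m, 1 ≤ m → m ≤ k - 1 → f m = C (b (m + 1)) * X (m + 1))
    (hf2 : ∀ m, k ≤ m → m ≤ N - 1 → f m = C (b (m + 1)) * X (m + 1) + P (m + 1))
    (hfN : f N = C (b 1) * X 1 + P (N + 1))
    (r s t : ℤ) (hr : r = 2 * (N : ℤ) + 2 - (k : ℤ)) (hs : s = (k : ℤ) - 1)
    (ht : t = ((k : ℤ) - 1) * ((N : ℤ) + 1))
    (w : ℕ → ℤ) (hw : ∀ j, 1 ≤ j → j ≤ N → w j = if j ≤ k - 1 then r else -s) :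
    ((k : ℤ) - 1) * r - ((N : ℤ) - (k : ℤ) + 1) * s - t = 0 ∧
    0 < ((d : ℤ) - 1) * t ∧
    ∀ m, 1 ≤ m → m ≤ N → ∀ i : ℕ →₀ ℕ, coeff i (f m) ≠ 0 →
      0 < w m - (∑ j ∈ Finset.Icc 1 N, (i j : ℤ) * w j) +
        ((d : ℤ) - ∑ j ∈ Finset.Icc 1 N, (i j : ℤ)) * t := by
  have hk : (2 : ℤ) ≤ k := by exact_mod_cast hk2
  have hN : (k : ℤ) ≤ N := by exact_mod_cast hkN
  have hd : (2 : ℤ) ≤ d := by exact_mod_cast hd2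
  have hs0 : 0 < s := by linarith
  have hst : s < t := by rw [hs, ht]; nlinarith
  have hdt : 0 < ((d : ℤ) - 1) * t := mul_pos (by linarith) (by linarith)
  refine ⟨by rw [hr, hs, ht]; ring, hdt, fun m hm1 hmN i hi => ?_⟩
  have hnonlin : ∀ m, k ≤ m → m ≤ N → ∀ i : ℕ →₀ ℕ, coeff i (P (m + 1)) ≠ 0 →
      0 < w m - (∑ j ∈ Finset.Icc 1 N, (i j : ℤ) * w j) +
        ((d : ℤ) - ∑ j ∈ Finset.Icc 1 N, (i j : ℤ)) * t := by
    intro m hkm hmN i hi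
    have hwhigh : ∀ j, k ≤ j → j ≤ N → w j = -s := fun j h1 h2 => by
      rw [hw j (by omega) h2, if_neg (by omega)]
    have hi' : i ∈ (P (m + 1)).support := mem_support_iff.mpr hi
    have hdeg : i.degree ≤ d := (le_totalDegree hi').trans (hPdeg m hkm hmN)
    rw [hwhigh m hkm hmN, high_variable_weight]
    · exact nonlinear_weight_pos (by positivity) (by exact_mod_cast hdeg) hd hs0 hst
    · intro j hj
      obtain ⟨h1, h2⟩ := hPvars m hkm hmN j ((mem_vars_iff_mem_support j).mpr ⟨i, hi', hj⟩)
      exact ⟨Finset.mem_Icc.mpr ⟨by omega, by omega⟩, hwhigh j h1 (by omega)⟩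
  have hlin : ∀ m, 1 ≤ m → m < N → ∀ i : ℕ →₀ ℕ,
      coeff i (C (b (m + 1)) * X (m + 1)) ≠ 0 →
      0 < w m - (∑ j ∈ Finset.Icc 1 N, (i j : ℤ) * w j) +
        ((d : ℤ) - ∑ j ∈ Finset.Icc 1 N, (i j : ℤ)) * t := by
    intro m hm1 hmN i hi
    rw [eq_single_of_coeff_C_mul_X_ne_zero hi,
      linear_weight (Finset.mem_Icc.mpr ⟨by omega, by omega⟩)]
    have hmono : w (m + 1) ≤ w m := by
      rw [hw m hm1 hmN.le, hw (m + 1) (by omega) hmN]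
      split_ifs <;> omega
    linarith
  rcases lt_or_ge m k with hmk | hkm
  · rw [hf1 m hm1 (by omega)] at hi
    exact hlin m hm1 (by omega) i hi
  rcases hmN.lt_or_eq with hlt | rfl
  · rw [hf2 m hkm (by omega), coeff_add] at hi
    by_cases hP : coeff i (P (m + 1)) = 0
    · exact hlin m hm1 hlt i (by simpa only [hP, add_zero] using hi)
    · exact hnonlin m hkm hmN i hP
  · rw [hfN, coeff_add] at hi
    by_cases hP : coeff i (P (m + 1)) = 0
    · rw [hP, add_zero] at hi
      rw [eq_single_of_coeff_C_mul_X_ne_zero hi,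
        linear_weight (Finset.mem_Icc.mpr ⟨le_rfl, hm1⟩), hw m hm1 le_rfl, hw 1 le_rfl hm1,
        if_neg (by omega), if_pos (by omega)]
      have h2 : (2 : ℤ) ≤ (d - 1) * (k - 1) := by
        rcases hkd with h | h
        · have : (3 : ℤ) ≤ k := by exact_mod_cast h
          nlinarith
        · have : (3 : ℤ) ≤ d := by exact_mod_cast h
          nlinarith
      rw [hr, hs, ht]
      -- The weight is `(d-1)(k-1)(N+1) - (2N+1)`.
      nlinarith [mul_le_mul_of_nonneg_right h2 (show (0 : ℤ) ≤ (m : ℤ) + 1 by positivity)]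
    · exact hnonlin m hkm le_rfl i hP
end

section
/- Suppose d ≥ 3. For α ∈ ℂ with α ≠ 0, let D(α) := diag(α⁴, α⁻¹, α⁻³) ∈ SL₃(ℂ), and let (G₁^α, G₂^α, G₃^α) be the components of the conjugated map v ↦ D(α)·F̄(D(α)⁻¹·v), which are again homogeneous polynomials of degree d in ℂ[x,y,z]. Then every coefficient of every G_m^α equals α^e times the corresponding coefficient of F̄ for some integer e > 0 depending only on the monomial and the coordinate m; consequently, as α → 0 the coefficient tuple of (G₁^α, G₂^α, G₃^α) converges to the zero tuple. -/
/-!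
The diagonal substitution `X j ↦ c j * X j` multiplies the coefficient of `X ^ i` by
`∏ j, c j ^ i j` (`coeff_aeval_C_mul_X`).  For `c = (α⁻⁴, α, α³)` this factor is `α` to the power
of the weight `-4 i₀ + i₁ + 3 i₂`, so conjugation by `D(α)` multiplies the coefficient of `X ^ i`
in the `m`-th component by `α ^ (t m + weight i)` with `t = (4, -1, -3)`.  Each term of `F̄` is
weighted homogeneous, and the resulting exponents are `3d + 2` for `y z^(d-1)`, `3d - 8` for
`x z^(d-1)`, `3d - 2j - 1 ≥ d - 1` for `y^j z^(d-j)`, and `3d - 3` for `z^d`.  All are positive when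
`d ≥ 3`; the term `x z^(d-1)` is what rules out `d = 2`.
-/

open MvPolynomial

/-- A diagonal substitution acts diagonally on coefficients. -/
theorem coeff_aeval_C_mul_X (c : Fin 3 → ℂ) (p : MvPolynomial (Fin 3) ℂ) (i : Fin 3 →₀ ℕ) :
    coeff i (aeval (fun j : Fin 3 => C (c j) * X j) p) = (∏ j, c j ^ i j) * coeff i p := by
  classical
  induction p using MvPolynomial.induction_on' with
  | monomial u r =>
    have h : aeval (fun j : Fin 3 => C (c j) * X j) (monomial u r) =
        C (∏ j, c j ^ u j) * (monomial u r : MvPolynomial (Fin 3) ℂ) := by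
      rw [aeval_monomial, monomial_eq, Finsupp.prod_fintype _ _ (by simp),
        Finsupp.prod_fintype _ _ (by simp)]
      simp only [mul_pow, Finset.prod_mul_distrib, map_prod, map_pow, algebraMap_eq]
      ring
    rw [h, coeff_C_mul, coeff_monomial]
    split_ifs with hu
    · rw [hu]
    · simp
  | add p q hp hq => rw [map_add, coeff_add, coeff_add, hp, hq, mul_add]

/-- The exponents by which `D(α)⁻¹` scales the coordinates, as weights of the variables. -/
def invWeight : Fin 3 → ℤ := ![-4, 1, 3]

/-- The exponents of the diagonal entries of `D(α)`. -/
def outWeight : Fin 3 → ℤ := ![4, -1, -3]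

theorem prod_zpow_eq_zpow_weight {α : ℂ} (hα : α ≠ 0) (i : Fin 3 →₀ ℕ) :
    ∏ j, (![α ^ (-4 : ℤ), α ^ (1 : ℤ), α ^ (3 : ℤ)] j) ^ i j =
      α ^ (Finsupp.weight invWeight i) := by
  rw [Finsupp.weight_apply, Finsupp.sum_fintype _ _ (by simp), Fin.prod_univ_three,
    Fin.sum_univ_three, zpow_add₀ hα, zpow_add₀ hα]
  simp only [invWeight, Matrix.cons_val, nsmul_eq_mul, ← zpow_natCast, ← zpow_mul, mul_comm]

theorem isWeightedHomogeneous_C_mul_X_mul_X_pow (w : Fin 3 → ℤ) (r : ℂ) (k l : Fin 3) (p q : ℕ) :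
    IsWeightedHomogeneous w (C r * X k ^ p * X l ^ q : MvPolynomial (Fin 3) ℂ)
      (p * w k + q * w l) := by
  have h := ((isWeightedHomogeneous_C w r).mul ((isWeightedHomogeneous_X ℂ w k).pow p)).mul
    ((isWeightedHomogeneous_X ℂ w l).pow q)
  simpa using h

/-- Every monomial occurring in `F̄` gets multiplied by a positive power of `α`. -/
theorem weight_pos_of_coeff_ne_zero (a b : ℂ) (d : ℕ) (hd : 3 ≤ d) (P : Polynomial ℂ)
    (Fb : Fin 3 → MvPolynomial (Fin 3) ℂ)
    (hF0 : Fb 0 = C a * X 1 * X 2 ^ (d - 1))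
    (hF1 : Fb 1 = C b * X 0 * X 2 ^ (d - 1) +
      ∑ j ∈ Finset.range (d + 1), C (P.coeff j) * X 1 ^ j * X 2 ^ (d - j))
    (hF2 : Fb 2 = X 2 ^ d) (m : Fin 3) (i : Fin 3 →₀ ℕ) (hi : coeff i (Fb m) ≠ 0) :
    0 < outWeight m + Finsupp.weight invWeight i := by
  fin_cases m
  · have h := isWeightedHomogeneous_C_mul_X_mul_X_pow invWeight a 1 2 1 (d - 1)
    rw [pow_one, ← hF0] at h
    have := h hi
    simp [invWeight, outWeight] at this ⊢
    omega
  · simp only [Fin.mk_one, hF1, coeff_add] at hi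
    by_cases hx : coeff i (C b * X 0 * X 2 ^ (d - 1) : MvPolynomial (Fin 3) ℂ) = 0
    · rw [hx, zero_add, coeff_sum] at hi
      obtain ⟨j, hj, hne⟩ := Finset.exists_ne_zero_of_sum_ne_zero hi
      have := isWeightedHomogeneous_C_mul_X_mul_X_pow invWeight (P.coeff j) 1 2 j (d - j) hne
      rw [Finset.mem_range] at hj
      simp [invWeight, outWeight] at this ⊢
      omega
    · have h := isWeightedHomogeneous_C_mul_X_mul_X_pow invWeight b 0 2 1 (d - 1)
      rw [pow_one] at h
      have := h hx
      simp [invWeight, outWeight] at this ⊢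
      omega
  · have h := isWeightedHomogeneous_C_mul_X_mul_X_pow invWeight 1 1 2 0 d
    rw [C_1, pow_zero, one_mul, one_mul, ← hF2] at h
    have := h hi
    simp [invWeight, outWeight] at this ⊢
    omega

/-- **Degeneration of Hénon maps of degree `d ≥ 3` under the 1-PS `diag(α⁴, α⁻¹, α⁻³)`.**
Let `F̄ = (a y z^(d-1), b x z^(d-1) + P̄(y,z), z^d)` be the homogenization of a planar Hénon
map of degree `d ≥ 3`, and for `α ≠ 0` let `(G₁^α, G₂^α, G₃^α)` be the components of the
conjugated map `v ↦ D(α)·F̄(D(α)⁻¹·v)` with `D(α) = diag(α⁴, α⁻¹, α⁻³)`.  Then every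
coefficient of every `G_m^α` equals `α^e` times the corresponding coefficient of `F̄_m` for
some integer `e > 0` depending only on the monomial and `m`; consequently, as `α → 0`, the
coefficients of `(G₁^α, G₂^α, G₃^α)` all converge to `0`. -/
theorem henon_degenerates_under_one_PS
    (a b : ℂ) (ha : a ≠ 0) (hb : b ≠ 0)
    (d : ℕ) (hd : 3 ≤ d) (P : Polynomial ℂ) (hP : P.natDegree = d)
    (Fb : Fin 3 → MvPolynomial (Fin 3) ℂ)
    (hF0 : Fb 0 = C a * X 1 * X 2 ^ (d - 1))
    (hF1 : Fb 1 = C b * X 0 * X 2 ^ (d - 1) +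
      ∑ j ∈ Finset.range (d + 1), C (P.coeff j) * X 1 ^ j * X 2 ^ (d - j))
    (hF2 : Fb 2 = X 2 ^ d)
    (G : ℂ → Fin 3 → MvPolynomial (Fin 3) ℂ)
    (hG : ∀ α : ℂ, α ≠ 0 → ∀ m : Fin 3,
      G α m = C (![α ^ (4 : ℤ), α ^ (-1 : ℤ), α ^ (-3 : ℤ)] m) *
        aeval (fun j : Fin 3 =>
          C (![α ^ (-4 : ℤ), α ^ (1 : ℤ), α ^ (3 : ℤ)] j) * X j) (Fb m)) :
    (∀ (m : Fin 3) (i : Fin 3 →₀ ℕ), ∃ e : ℤ, 0 < e ∧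
      ∀ α : ℂ, α ≠ 0 → coeff i (G α m) = α ^ e * coeff i (Fb m)) ∧
    (∀ (m : Fin 3) (i : Fin 3 →₀ ℕ),
      Filter.Tendsto (fun α : ℂ => coeff i (G α m))
        (nhdsWithin 0 {(0 : ℂ)}ᶜ) (nhds 0)) := by
  have key : ∀ (m : Fin 3) (i : Fin 3 →₀ ℕ), ∃ e : ℤ, 0 < e ∧
      ∀ α : ℂ, α ≠ 0 → coeff i (G α m) = α ^ e * coeff i (Fb m) := by
    intro m i
    have hcoeff : ∀ α : ℂ, α ≠ 0 → coeff i (G α m) =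
        α ^ (outWeight m + Finsupp.weight invWeight i) * coeff i (Fb m) := by
      intro α hα
      have hout : ![α ^ (4 : ℤ), α ^ (-1 : ℤ), α ^ (-3 : ℤ)] m = α ^ outWeight m := by
        fin_cases m <;> rfl
      rw [hG α hα m, coeff_C_mul, coeff_aeval_C_mul_X, prod_zpow_eq_zpow_weight hα, hout,
        zpow_add₀ hα, mul_assoc]
    by_cases hi : coeff i (Fb m) = 0
    -- For a monomial absent from `F̄` both coefficients vanish, so any positive exponent works.
    · exact ⟨1, one_pos, fun α hα => by rw [hcoeff α hα, hi, mul_zero, mul_zero]⟩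
    · exact ⟨_, weight_pos_of_coeff_ne_zero a b d hd P Fb hF0 hF1 hF2 m i hi, hcoeff⟩
  refine ⟨key, fun m i => ?_⟩
  obtain ⟨e, he, h⟩ := key m i
  lift e to ℕ using he.le
  have hlim : Filter.Tendsto (fun α : ℂ => α ^ e * coeff i (Fb m))
      (nhdsWithin 0 {(0 : ℂ)}ᶜ) (nhds 0) := by
    have hc : Continuous fun α : ℂ => α ^ e * coeff i (Fb m) := by fun_prop
    have h0 := hc.tendsto 0
    rw [zero_pow (by omega), zero_mul] at h0
    exact h0.mono_left nhdsWithin_le_nhds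
  refine hlim.congr' ?_
  filter_upwards [self_mem_nhdsWithin] with α hα
  rw [h α hα, zpow_natCast]
end

section
/- Suppose d = 2, so F̄ = (a y z, b x z + P̄(y,z), z²) with P̄(y,z) = c₂y² + c₁yz + c₀z², c₂ ≠ 0. Then for every g ∈ SL₃(K) and all integers r, s satisfying r ≥ s−r ≥ −s and r > 0, if (G₁,G₂,G₃) denotes the components of the conjugated map v ↦ g⁻¹·F̄(g·v), there exist an index m ∈ {1,2,3} and a monomial x^i y^j z^l with i+j+l = 2 having nonzero coefficient in G_m whose weight e_m(i,j,l) = w_m − (i·r + j·(s−r) − l·s) is ≤ 0. (By the Hilbert–Mumford numerical criterion, since every nontrivial one-parameter subgroup of SL₃ is conjugate to a diagonal one with non-increasing weights, this is the statement that F̄ is SL₃-semistable.) -/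
/-!
Suppose every coefficient of weight `≤ 0` of the conjugate vanishes, and write
`w = (r, s - r, -s)`, so that `w₁ ≥ w₂ ≥ w₃`, `w₁ > 0` and `w₁ + w₂ + w₃ = 0`.

The monomial `x²` has negative weight in every component, so `F̄ (g e₁) = 0`. The only common zero
of `F̄` in `P²` is `[1 : 0 : 0]`, hence `g e₁` is a multiple of `e₁`. Let `B` be the polarization of
`F̄`; then `B(e₁, v)` is `b v₃ e₂`, and it governs the coefficients of `xy` and `xz`.

* If `w₂ ≥ 0`, then `xy` has weight `≤ 0` in every component, so `B(g e₁, g e₂) = 0` and `g` is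
  upper triangular. But then the coefficient of `y²` in the second component, of weight `-w₂ ≤ 0`,
  is `c₂` times the second diagonal entry of `g`, which is nonzero.
* If `w₂ < 0`, then `xy` and `xz` have negative weight in the second and third components, so
  `B(g e₁, g e₂)` and `B(g e₁, g e₃)` lie on the line `K e₁`. Being multiples of `e₂` they vanish,
  so the last row of `g` is zero, contradicting `det g = 1`.

The vector of coefficients of a given monomial in the conjugate is `g⁻¹` applied to the vector of
its coefficients in `F̄ ∘ g`; the latter is computed by `coeff_linear_mul_linear`.
-/

open MvPolynomial

/-- The components of the conjugate `v ↦ g⁻¹ · F(g·v)` of a triple `F` of polynomials on `K³`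
by a matrix `g`. -/
noncomputable def henonConjComp {K : Type*} [Field K] (g : Matrix (Fin 3) (Fin 3) K)
    (F : Fin 3 → MvPolynomial (Fin 3) K) (m : Fin 3) : MvPolynomial (Fin 3) K :=
  ∑ l : Fin 3, C (g⁻¹ m l) *
    aeval (fun j : Fin 3 => ∑ p : Fin 3, C (g j p) * X p) (F l)

/-- The weight `e_m(i,j,l) = w_m - (i·r + j·(s-r) - l·s)` of the monomial `x^i y^j z^l` in the
`m`-th component, for the one-parameter subgroup `diag(α^r, α^(s-r), α^(-s))` of `SL₃`. -/
def henonWeight (r s : ℤ) (m : Fin 3) (i : Fin 3 →₀ ℕ) : ℤ :=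
  ![r, s - r, -s] m - ((i 0 : ℤ) * r + (i 1 : ℤ) * (s - r) - (i 2 : ℤ) * s)

/-- The coefficient of `X p * X q` in the product of two linear forms in three variables. -/
theorem coeff_linear_mul_linear {K : Type*} [Field K] (u v : Fin 3 → K) (p q : Fin 3) :
    coeff (Finsupp.single p 1 + Finsupp.single q 1)
      ((∑ i : Fin 3, C (u i) * X i) * (∑ j : Fin 3, C (v j) * X j) : MvPolynomial (Fin 3) K) =
    if p = q then u p * v p else u p * v q + u q * v p := by
  have h : ((∑ i : Fin 3, C (u i) * X i) * (∑ j : Fin 3, C (v j) * X j) :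
      MvPolynomial (Fin 3) K) = ∑ i : Fin 3, ∑ j : Fin 3,
        monomial (Finsupp.single i 1 + Finsupp.single j 1) (u i * v j) := by
    rw [Finset.sum_mul_sum]
    refine Finset.sum_congr rfl fun i _ => Finset.sum_congr rfl fun j _ => ?_
    rw [C_mul_X_eq_monomial, C_mul_X_eq_monomial, monomial_mul]
  rw [h]
  simp only [coeff_sum, coeff_monomial]
  fin_cases p <;> fin_cases q <;>
    simp [Fin.sum_univ_three, Finsupp.ext_iff, Fin.forall_fin_succ, Finsupp.single_apply]
  all_goals ring

/-- The coefficient of `X p * X q` in the product of the linear forms given by the rows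
`i` and `j` of `g`. -/
def rowCoeff {K : Type*} [Field K] (g : Matrix (Fin 3) (Fin 3) K) (p q i j : Fin 3) : K :=
  if p = q then g i p * g j p else g i p * g j q + g i q * g j p

theorem coeff_henonConjComp {K : Type*} [Field K]
    (a b c₂ c₁ c₀ : K) (F : Fin 3 → MvPolynomial (Fin 3) K)
    (hF0 : F 0 = C a * X 1 * X 2)
    (hF1 : F 1 = C b * X 0 * X 2 + C c₂ * X 1 ^ 2 + C c₁ * X 1 * X 2 + C c₀ * X 2 ^ 2)
    (hF2 : F 2 = X 2 ^ 2)
    (g : Matrix (Fin 3) (Fin 3) K) (m p q : Fin 3) :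
    coeff (Finsupp.single p 1 + Finsupp.single q 1) (henonConjComp g F m) =
      g⁻¹ m 0 * (a * rowCoeff g p q 1 2) +
      g⁻¹ m 1 * (b * rowCoeff g p q 0 2 + c₂ * rowCoeff g p q 1 1 + c₁ * rowCoeff g p q 1 2
        + c₀ * rowCoeff g p q 2 2) +
      g⁻¹ m 2 * rowCoeff g p q 2 2 := by
  unfold henonConjComp
  rw [Fin.sum_univ_three, hF0, hF1, hF2]
  simp only [map_add, map_mul, aeval_X, aeval_C, algebraMap_eq, pow_two, mul_assoc,
    coeff_add, coeff_C_mul, coeff_linear_mul_linear]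
  rfl


/-- **Semistability of the degree-2 Hénon map** (Hilbert–Mumford witness form).
Let `F̄ = (a y z, b x z + c₂y² + c₁yz + c₀z², z²)` with `a, b, c₂ ≠ 0` be the homogenization
of a degree-2 planar Hénon map over an algebraically closed field of characteristic `0`.
Then for every `g ∈ SL₃(K)` and all integers `r ≥ s - r ≥ -s` with `r > 0`, some monomial
with nonzero coefficient in some component of the conjugate of `F̄` by `g` has weight
`e_m(i,j,l) ≤ 0`. -/
theorem henon_deg2_semistable {K : Type*} [Field K] [IsAlgClosed K] [CharZero K]
    (a b c₂ c₁ c₀ : K) (ha : a ≠ 0) (hb : b ≠ 0) (hc : c₂ ≠ 0)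
    (F : Fin 3 → MvPolynomial (Fin 3) K)
    (hF0 : F 0 = C a * X 1 * X 2)
    (hF1 : F 1 = C b * X 0 * X 2 + C c₂ * X 1 ^ 2 + C c₁ * X 1 * X 2 + C c₀ * X 2 ^ 2)
    (hF2 : F 2 = X 2 ^ 2)
    (g : Matrix (Fin 3) (Fin 3) K) (hg : g.det = 1)
    (r s : ℤ) (h1 : s - r ≤ r) (h2 : -s ≤ s - r) (h3 : 0 < r) :
    ∃ (m : Fin 3) (i : Fin 3 →₀ ℕ), i 0 + i 1 + i 2 = 2 ∧
      coeff i (henonConjComp g F m) ≠ 0 ∧ henonWeight r s m i ≤ 0 := by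
  by_contra hcon
  push Not at hcon
  have key : ∀ m p q : Fin 3,
      henonWeight r s m (Finsupp.single p 1 + Finsupp.single q 1) ≤ 0 →
      g⁻¹ m 0 * (a * rowCoeff g p q 1 2) +
      g⁻¹ m 1 * (b * rowCoeff g p q 0 2 + c₂ * rowCoeff g p q 1 1 + c₁ * rowCoeff g p q 1 2
        + c₀ * rowCoeff g p q 2 2) +
      g⁻¹ m 2 * rowCoeff g p q 2 2 = 0 := by
    intro m p q hw
    rw [← coeff_henonConjComp a b c₂ c₁ c₀ F hF0 hF1 hF2 g m p q]
    by_contra hne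
    refine absurd (hcon m _ ?_ hne) (not_lt.mpr hw)
    fin_cases p <;> fin_cases q <;> simp
  have hu : IsUnit g.det := by rw [hg]; exact isUnit_one
  have hgh : g * g⁻¹ = 1 := Matrix.mul_nonsing_inv g hu
  have hhg : g⁻¹ * g = 1 := Matrix.nonsing_inv_mul g hu
  generalize g⁻¹ = h at key hgh hhg
  -- If all three components of `g⁻¹ t` vanish, so does `t`.
  have hinj : ∀ t : Fin 3 → K, (∀ m, h m 0 * t 0 + h m 1 * t 1 + h m 2 * t 2 = 0) → t = 0 := by
    intro t ht
    have h0 : h.mulVec t = 0 := by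
      ext m
      simpa [Matrix.mulVec, dotProduct, Fin.sum_univ_three] using ht m
    rw [← Matrix.one_mulVec t, ← hgh, ← Matrix.mulVec_mulVec, h0, Matrix.mulVec_zero]
  have hxx := hinj ![_, _, _] (fun m => key m 0 0 (by
    fin_cases m <;> simp [henonWeight] <;> linarith))
  have e20 : g 2 0 = 0 := by simpa [rowCoeff] using congrFun hxx 2
  have e10 : g 1 0 = 0 := by simpa [rowCoeff, e20, hc] using congrFun hxx 1
  have hdet : g 0 0 * (g 1 1 * g 2 2 - g 1 2 * g 2 1) = 1 := by
    rw [Matrix.det_fin_three, e10, e20] at hg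
    linear_combination hg
  have e00 : g 0 0 ≠ 0 := left_ne_zero_of_mul_eq_one hdet
  -- The sign of the middle weight `w₂ = s - r` separates the two cases.
  rcases le_or_gt 0 (s - r) with hs | hs
  · have hxy := hinj ![_, _, _] (fun m => key m 0 1 (by
      fin_cases m <;> simp [henonWeight] <;> linarith))
    have e21 : g 2 1 = 0 := by
      simpa [rowCoeff, e20, e10, hb, e00] using congrFun hxy 1
    have hyy := key 1 1 1 (by simp [henonWeight]; linarith)
    have e11 : g 1 1 ≠ 0 := by
      rintro h0
      simp [h0, e21] at hdet
    have q10 := congrFun (congrFun hhg 1) 0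
    have q11 := congrFun (congrFun hhg 1) 1
    simp [Matrix.mul_apply, Fin.sum_univ_three, e10, e20, e00] at q10
    simp [Matrix.mul_apply, Fin.sum_univ_three, q10, e21] at q11
    simp [rowCoeff, e21, hc, e11] at hyy
    simp [hyy] at q11
  · have q := congrFun (congrFun hgh 1) 1
    simp [Matrix.mul_apply, Fin.sum_univ_three, e10] at q
    have hrow : ∀ n : Fin 3, n ≠ 0 → g 2 n = 0 := by
      intro n hn
      have k1 := key 1 0 n (by
        fin_cases n <;> simp [henonWeight] at hn ⊢ <;> linarith)
      have k2 := key 2 0 n (by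
        fin_cases n <;> simp [henonWeight] at hn ⊢ <;> linarith)
      simp [rowCoeff, hn.symm, e10, e20, hb, e00] at k1 k2
      -- `g⁻¹ e₂` is not a multiple of `e₁`, so one of its last two coordinates is nonzero.
      rcases k1 with k1 | k1
      · rcases k2 with k2 | k2
        · simp [k1, k2] at q
        · exact k2
      · exact k1
    simp [hrow 1 (by decide), hrow 2 (by decide)] at hdet
end

section
/- Let F₁, F₂, F₃ ∈ K[x,y,z] be homogeneous polynomials of degree 2 with no common irreducible factor that are algebraically independent over K (so F = [F₁:F₂:F₃] is a dominant rational self-map of P² of degree 2). Suppose there exist g ∈ SL₃(K) and integers r, s with r ≥ s−r ≥ −s and r > 0 such that every monomial with nonzero coefficient in every component of the conjugate (G₁,G₂,G₃) of F by g (i.e., the components of v ↦ g⁻¹·F(g·v)) has strictly positive weight e_m(i,j,l). Then at least one of the following holds: (a) there exist linearly independent linear forms ℓ₁, ℓ₂ ∈ K[x,y,z] and homogeneous polynomials H₁, H₂ ∈ K[u,v] of degree 2 such that ℓ₁(F₁,F₂,F₃) = H₁(ℓ₁,ℓ₂) and ℓ₂(F₁,F₂,F₃) = H₂(ℓ₁,ℓ₂)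 (F is linearly fibered over P¹); or (b) there is a nonzero linear form ℓ ∈ K[x,y,z] such that ℓ² divides each of the three polynomials F₁(F₁,F₂,F₃), F₂(F₁,F₂,F₃), F₃(F₁,F₂,F₃) (so the second iterate of F has degree ≤ 2 and F is not algebraically stable). -/
/-!
Write `a = r`, `b = s - r`, `c = -s` for the weights of `x, y, z`, so that `a ≥ b ≥ c`,
`a + b + c = 0` and `a > 0 > c`, and let `G` be the conjugate of `F` by `g`. A quadratic monomial
can occur in the component `G_m` only if its weight is smaller than that of the `m`-th coordinate.

* If `b ≤ 0`, no monomial containing `x` is allowed in `G₂` or `G₃`, so both are binary quadratic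
  forms in `y, z`: the map `G` preserves the pencil of lines `[y : z]`.
* If `b > 0`, only `z²` is allowed in `G₃`, every monomial allowed in `G₂` contains `z`, and neither
  `x²` nor `xy` is allowed in `G₁`. Hence `z² ∣ G₃` and `z ∣ G₂`. Since every monomial of every
  `G_m` is `xz`, `y²`, `yz` or `z²`, substituting `G` into `G_m` produces a multiple of `z²`.

These properties are transported to `F` by the linear forms `L_m = ∑ₗ (g⁻¹)ₘₗ Xₗ`, the coordinates
`g⁻¹ · v`: they satisfy `L_m(F) = G_m(L)`, and `F_l(F) = ∑ₘ gₗₘ G_m(A)` with `A_j = G_j(L)`.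
-/

open MvPolynomial

/-- The exponent vector of the monomial `x^i y^j z^k`. -/
noncomputable def expo (i j k : ℕ) : Fin 3 →₀ ℕ := Finsupp.equivFunOnFinite.symm ![i, j, k]

@[simp] lemma expo_zero (i j k : ℕ) : expo i j k 0 = i := rfl
@[simp] lemma expo_one (i j k : ℕ) : expo i j k 1 = j := rfl
@[simp] lemma expo_two (i j k : ℕ) : expo i j k 2 = k := rfl

lemma expo_inj {i j k i' j' k' : ℕ} : expo i j k = expo i' j' k' ↔ i = i' ∧ j = j' ∧ k = k' := by
  constructor
  · intro h
    exact ⟨DFunLike.congr_fun h 0, DFunLike.congr_fun h 1, DFunLike.congr_fun h 2⟩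
  · rintro ⟨rfl, rfl, rfl⟩; rfl

lemma eq_expo (d : Fin 3 →₀ ℕ) : d = expo (d 0) (d 1) (d 2) := by
  ext i; fin_cases i <;> rfl

lemma aeval_monomial_expo {K A : Type*} [Field K] [CommRing A] [Algebra K A] (v : Fin 3 → A)
    (i j k : ℕ) (c : K) :
    aeval v (monomial (expo i j k) c) = algebraMap K A c * (v 0 ^ i * v 1 ^ j * v 2 ^ k) := by
  rw [aeval_monomial, Finsupp.prod_fintype _ _ (by simp), Fin.prod_univ_three]
  simp

lemma quadratic_eq {K : Type*} [Field K] {P : MvPolynomial (Fin 3) K} (hP : P.IsHomogeneous 2) :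
    P = monomial (expo 2 0 0) (coeff (expo 2 0 0) P) + monomial (expo 1 1 0) (coeff (expo 1 1 0) P)
      + monomial (expo 1 0 1) (coeff (expo 1 0 1) P) + monomial (expo 0 2 0) (coeff (expo 0 2 0) P)
      + monomial (expo 0 1 1) (coeff (expo 0 1 1) P)
      + monomial (expo 0 0 2) (coeff (expo 0 0 2) P) := by
  ext d
  rw [eq_expo d]
  generalize d 0 = i, d 1 = j, d 2 = k
  simp only [coeff_add, coeff_monomial, expo_inj]
  by_cases h : i + j + k = 2
  · have hi : i ≤ 2 := by omega
    have hj : j ≤ 2 := by omega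
    obtain rfl : k = 2 - i - j := by omega
    interval_cases i <;> interval_cases j <;> simp at h ⊢
  · rw [hP.coeff_eq_zero (d := expo i j k)
      (by rw [Finsupp.degree_eq_sum, Fin.sum_univ_three]; simpa using h)]
    repeat rw [if_neg (by omega)]
    simp

/-- Evaluation of a ternary quadratic form in terms of its six coefficients. -/
lemma aeval_quadratic {K A : Type*} [Field K] [CommRing A] [Algebra K A]
    {P : MvPolynomial (Fin 3) K} (hP : P.IsHomogeneous 2) (v : Fin 3 → A) :
    aeval v P = algebraMap K A (coeff (expo 2 0 0) P) * v 0 ^ 2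
      + algebraMap K A (coeff (expo 1 1 0) P) * (v 0 * v 1)
      + algebraMap K A (coeff (expo 1 0 1) P) * (v 0 * v 2)
      + algebraMap K A (coeff (expo 0 2 0) P) * v 1 ^ 2
      + algebraMap K A (coeff (expo 0 1 1) P) * (v 1 * v 2)
      + algebraMap K A (coeff (expo 0 0 2) P) * v 2 ^ 2 := by
  conv_lhs => rw [quadratic_eq hP]
  simp only [map_add, aeval_monomial_expo]
  ring

/-- The linear forms `∑ₚ M_jp Xₚ`, i.e. the coordinates of `M · v`. -/
noncomputable def linForm {K : Type*} [Field K] (M : Matrix (Fin 3) (Fin 3) K) (j : Fin 3) :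
    MvPolynomial (Fin 3) K := ∑ p : Fin 3, C (M j p) * X p

lemma linForm_homog {K : Type*} [Field K] (M : Matrix (Fin 3) (Fin 3) K) (j : Fin 3) :
    (linForm M j).IsHomogeneous 1 :=
  IsHomogeneous.sum _ _ _ fun p _ => by
    simpa using (isHomogeneous_C (Fin 3) (M j p)).mul (isHomogeneous_X K p)

lemma aeval_linForm {K A : Type*} [Field K] [CommRing A] [Algebra K A]
    (M : Matrix (Fin 3) (Fin 3) K) (j : Fin 3) (v : Fin 3 → A) :
    aeval v (linForm M j) = ∑ p, algebraMap K A (M j p) * v p := by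
  simp [linForm, map_sum]

lemma aeval_linForm_linForm {K : Type*} [Field K] (M N : Matrix (Fin 3) (Fin 3) K) (j : Fin 3) :
    aeval (linForm N) (linForm M j) = linForm (M * N) j := by
  rw [aeval_linForm]
  simp only [linForm, Finset.mul_sum, Matrix.mul_apply, map_sum, Finset.sum_mul, map_mul,
    algebraMap_eq]
  rw [Finset.sum_comm]
  simp only [mul_assoc]

lemma linForm_one {K : Type*} [Field K] : linForm (1 : Matrix (Fin 3) (Fin 3) K) = X := by
  ext1 j
  simp [linForm, Matrix.one_apply]

lemma linForm_linearIndependent {K : Type*} [Field K] {M : Matrix (Fin 3) (Fin 3) K}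
    (hM : IsUnit M) : LinearIndependent K (linForm M) := by
  have hX : LinearIndependent K (X : Fin 3 → MvPolynomial (Fin 3) K) :=
    linearIndependent_X (Fin 3) K
  have hrow := Matrix.linearIndependent_rows_of_isUnit hM
  rw [Fintype.linearIndependent_iff] at hX hrow ⊢
  intro c hc
  refine hrow c ?_
  ext p
  have key : ∑ p, (∑ j, c j * M j p) • (X p : MvPolynomial (Fin 3) K) = 0 := by
    rw [← hc]
    simp only [linForm, Finset.smul_sum, Finset.sum_smul, smul_eq_C_mul, C_mul, mul_assoc]
    rw [Finset.sum_comm]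
  simpa [Finset.sum_apply, Matrix.row] using hX _ key p

lemma henonConjComp_homog {K : Type*} [Field K] (g : Matrix (Fin 3) (Fin 3) K)
    {F : Fin 3 → MvPolynomial (Fin 3) K} (hF : ∀ m, (F m).IsHomogeneous 2) (m : Fin 3) :
    (henonConjComp g F m).IsHomogeneous 2 :=
  IsHomogeneous.sum _ _ _ fun l _ => by
    have h := (hF l).aeval (linForm g) (linForm_homog g)
    exact h.C_mul _

/-- The intertwining relation `g⁻¹ · F(v) = G(g⁻¹ · v)` for the conjugate `G` of `F`. -/
lemma aeval_inv_linForm {K : Type*} [Field K] {g : Matrix (Fin 3) (Fin 3) K} (hg : g.det = 1)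
    (F : Fin 3 → MvPolynomial (Fin 3) K) (m : Fin 3) :
    aeval F (linForm g⁻¹ m) = aeval (linForm g⁻¹) (henonConjComp g F m) := by
  have hinv (l : Fin 3) : aeval (linForm g⁻¹) (aeval (linForm g) (F l)) = F l := by
    have h : (aeval (linForm g⁻¹)).comp (aeval (linForm g)) =
        AlgHom.id K (MvPolynomial (Fin 3) K) := by
      ext1 j
      rw [AlgHom.comp_apply, aeval_X, aeval_linForm_linForm,
        Matrix.mul_nonsing_inv g (by simp [hg]), linForm_one, AlgHom.id_apply]
    exact DFunLike.congr_fun h (F l)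
  rw [aeval_linForm, henonConjComp, map_sum]
  refine Finset.sum_congr rfl fun l _ => ?_
  rw [map_mul, aeval_C]
  exact congrArg _ (hinv l).symm

/-- The second iterate `F(F)` is `g` applied to `G(A)`, where `A = G(g⁻¹ · v)`. -/
lemma aeval_self {K : Type*} [Field K] {g : Matrix (Fin 3) (Fin 3) K} (hg : g.det = 1)
    (F : Fin 3 → MvPolynomial (Fin 3) K) (l : Fin 3) :
    aeval F (F l) = ∑ m, C (g l m) *
      aeval (fun j => aeval (linForm g⁻¹) (henonConjComp g F j)) (henonConjComp g F m) := by
  have hF : F l = ∑ m, C (g l m) * aeval F (linForm g⁻¹ m) := by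
    have h := congrArg (aeval F) (aeval_linForm_linForm g g⁻¹ l)
    rw [Matrix.mul_nonsing_inv g (by simp [hg]), linForm_one, aeval_X, aeval_linForm, map_sum] at h
    simpa using h.symm
  conv_lhs => rw [hF]
  rw [map_sum]
  refine Finset.sum_congr rfl fun m _ => ?_
  rw [map_mul, aeval_C, aeval_inv_linForm hg]
  congr 1
  rw [← AlgHom.comp_apply, comp_aeval]
  simp only [aeval_inv_linForm hg]

/-- **Classification of unstable dominant quadratic maps of `ℙ²`.**
Let `F = (F₁, F₂, F₃)` be homogeneous of degree `2` with no common irreducible factor and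
algebraically independent over `K` (so `[F₁:F₂:F₃]` is a dominant degree-2 rational self-map
of `ℙ²`), and suppose `F` is destabilized by some `g ∈ SL₃(K)` and weights `r ≥ s-r ≥ -s`,
`r > 0` (every monomial occurring in the conjugate has strictly positive weight; by the
Hilbert–Mumford criterion this says `F` is `SL₃`-unstable).  Then either `F` is linearly
fibered over `ℙ¹`, or `ℓ²` divides every component of the second iterate of `F` for some
nonzero linear form `ℓ` (so `deg F² ≤ 2` and `F` is not algebraically stable). -/
theorem unstable_quadratic_classification {K : Type*} [Field K] [IsAlgClosed K] [CharZero K]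
    (F : Fin 3 → MvPolynomial (Fin 3) K)
    (hhom : ∀ m, (F m).IsHomogeneous 2)
    (hnocommon : ¬ ∃ q : MvPolynomial (Fin 3) K, Irreducible q ∧ ∀ m, q ∣ F m)
    (hindep : AlgebraicIndependent K F)
    (hunstable : ∃ (g : Matrix (Fin 3) (Fin 3) K) (r s : ℤ),
      g.det = 1 ∧ s - r ≤ r ∧ -s ≤ s - r ∧ 0 < r ∧
      ∀ (m : Fin 3) (i : Fin 3 →₀ ℕ),
        coeff i (henonConjComp g F m) ≠ 0 → 0 < henonWeight r s m i) :
    (∃ ℓ₁ ℓ₂ : MvPolynomial (Fin 3) K,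
      ℓ₁.IsHomogeneous 1 ∧ ℓ₂.IsHomogeneous 1 ∧ LinearIndependent K ![ℓ₁, ℓ₂] ∧
      ∃ H₁ H₂ : MvPolynomial (Fin 2) K, H₁.IsHomogeneous 2 ∧ H₂.IsHomogeneous 2 ∧
        aeval F ℓ₁ = aeval ![ℓ₁, ℓ₂] H₁ ∧ aeval F ℓ₂ = aeval ![ℓ₁, ℓ₂] H₂) ∨
    (∃ ℓ : MvPolynomial (Fin 3) K, ℓ ≠ 0 ∧ ℓ.IsHomogeneous 1 ∧
      ∀ m, ℓ ^ 2 ∣ aeval F (F m)) := by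
  obtain ⟨g, r, s, hg, h1, h2, hr, hw⟩ := hunstable
  have hG := henonConjComp_homog g hhom
  have hL := linForm_linearIndependent (M := g⁻¹)
    ((Matrix.isUnit_nonsing_inv_iff).2 ((Matrix.isUnit_iff_isUnit_det g).2 (by simp [hg])))
  have hz (m : Fin 3) (i j k : ℕ)
      (h : ![r, s - r, -s] m - ((i : ℤ) * r + (j : ℤ) * (s - r) - (k : ℤ) * s) ≤ 0) :
      coeff (expo i j k) (henonConjComp g F m) = 0 := by
    by_contra hne
    have := hw m _ hne
    simp only [henonWeight, expo_zero, expo_one, expo_two] at this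
    omega
  rcases le_or_gt (s - r) 0 with hb | hb
  · left
    -- A form in `y, z` alone, rewritten as a binary form.
    have hbin (m : Fin 3) (hx2 : coeff (expo 2 0 0) (henonConjComp g F m) = 0)
        (hxy : coeff (expo 1 1 0) (henonConjComp g F m) = 0)
        (hxz : coeff (expo 1 0 1) (henonConjComp g F m) = 0) :
        ∃ H : MvPolynomial (Fin 2) K, H.IsHomogeneous 2 ∧
          aeval F (linForm g⁻¹ m) = aeval ![linForm g⁻¹ 1, linForm g⁻¹ 2] H := by
      refine ⟨C (coeff (expo 0 2 0) (henonConjComp g F m)) * X 0 ^ 2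
        + C (coeff (expo 0 1 1) (henonConjComp g F m)) * (X 0 * X 1)
        + C (coeff (expo 0 0 2) (henonConjComp g F m)) * X 1 ^ 2, ?_, ?_⟩
      · refine ((?_ : IsHomogeneous _ _).add ?_).add ?_
        · simpa using (isHomogeneous_C (Fin 2) _).mul ((isHomogeneous_X K (0 : Fin 2)).pow 2)
        · simpa using (isHomogeneous_C (Fin 2) _).mul
            ((isHomogeneous_X K (0 : Fin 2)).mul (isHomogeneous_X K (1 : Fin 2)))
        · simpa using (isHomogeneous_C (Fin 2) _).mul ((isHomogeneous_X K (1 : Fin 2)).pow 2)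
      · rw [aeval_inv_linForm hg, aeval_quadratic (hG m), hx2, hxy, hxz]
        simp
    obtain ⟨H₁, hH₁, e₁⟩ := hbin 1 (hz _ _ _ _ (by simp; omega)) (hz _ _ _ _ (by simp; omega))
      (hz _ _ _ _ (by simp; omega))
    obtain ⟨H₂, hH₂, e₂⟩ := hbin 2 (hz _ _ _ _ (by simp; omega)) (hz _ _ _ _ (by simp; omega))
      (hz _ _ _ _ (by simp; omega))
    refine ⟨linForm g⁻¹ 1, linForm g⁻¹ 2, linForm_homog _ _, linForm_homog _ _, ?_,
      H₁, H₂, hH₁, hH₂, e₁, e₂⟩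
    have h := hL.comp ![1, 2] (by decide)
    convert h using 1
    ext1 i
    fin_cases i <;> rfl
  · right
    refine ⟨linForm g⁻¹ 2, hL.ne_zero 2, linForm_homog _ _, fun l => ?_⟩
    rw [aeval_self hg]
    refine Finset.dvd_sum fun m _ => Dvd.dvd.mul_left ?_ _
    have hA2 : linForm g⁻¹ 2 ^ 2 ∣ aeval (linForm g⁻¹) (henonConjComp g F 2) := by
      rw [aeval_quadratic (hG 2), hz 2 2 0 0 (by simp; omega), hz 2 1 1 0 (by simp; omega),
        hz 2 1 0 1 (by simp; omega), hz 2 0 2 0 (by simp; omega), hz 2 0 1 1 (by simp; omega)]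
      simp
    have hA1 : linForm g⁻¹ 2 ∣ aeval (linForm g⁻¹) (henonConjComp g F 1) := by
      rw [aeval_quadratic (hG 1), hz 1 2 0 0 (by simp; omega), hz 1 1 1 0 (by simp; omega),
        hz 1 0 2 0 (by simp; omega)]
      exact ⟨C (coeff (expo 1 0 1) (henonConjComp g F 1)) * linForm g⁻¹ 0
        + C (coeff (expo 0 1 1) (henonConjComp g F 1)) * linForm g⁻¹ 1
        + C (coeff (expo 0 0 2) (henonConjComp g F 1)) * linForm g⁻¹ 2, by
          simp only [algebraMap_eq, map_zero]; ring⟩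
    have hx2 : coeff (expo 2 0 0) (henonConjComp g F m) = 0 :=
      hz _ _ _ _ (by fin_cases m <;> simp <;> omega)
    have hxy : coeff (expo 1 1 0) (henonConjComp g F m) = 0 :=
      hz _ _ _ _ (by fin_cases m <;> simp <;> omega)
    rw [aeval_quadratic (hG m), hx2, hxy]
    simp only [map_zero, zero_mul, zero_add]
    refine dvd_add (dvd_add (dvd_add ?_ ?_) ?_) ?_ <;> refine Dvd.dvd.mul_left ?_ _
    · exact hA2.mul_left _
    · exact pow_dvd_pow_of_dvd hA1 2
    · exact hA2.mul_left _
    · exact hA2.trans (dvd_pow_self _ two_ne_zero)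
end

section
/- Let F₁ ∈ K[x,y,z] be homogeneous of degree 2 with zero coefficients on the monomials x² and xy, let F₂ = z·L with L ∈ K[x,y,z] a linear form, and let F₃ = c·z² with c ∈ K. Then z² divides each of the three degree-4 polynomials F₁(F₁,F₂,F₃), F₂(F₁,F₂,F₃), and F₃(F₁,F₂,F₃) obtained by substituting (x,y,z) ↦ (F₁,F₂,F₃). In particular, the second iterate of the rational map F = [F₁:F₂:F₃] of P² has degree at most 2. -/
/-! A quadratic form with no `x²` or `xy` term is a combination of the monomials `y²`, `xz`, `yz`
and `z²`, so each of its monomials contains `z` or `y²`. Substituting `F₁, F₂, F₃`, a factor `z`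
becomes `F₃ = c z²`, and `y²` becomes `F₂² = z² L²`; either way `z²` appears. For the other two
components, `F₂ = z L` becomes `F₃ · L(F₁, F₂, F₃)` and `F₃` becomes `c F₃²`, both multiples of
`F₃`. -/

open MvPolynomial

/-- The only monomials of a quadratic form without `x²` and `xy` terms are those divisible
by `z` or by `y²`. -/
theorem exponent_cases {K : Type*} [Field K] {F : MvPolynomial (Fin 3) K}
    (hF : F.IsHomogeneous 2) (hx2 : coeff (Finsupp.single 0 2) F = 0)
    (hxy : coeff (Finsupp.single 0 1 + Finsupp.single 1 1) F = 0)
    {d : Fin 3 →₀ ℕ} (hd : coeff d F ≠ 0) : 1 ≤ d 2 ∨ 2 ≤ d 1 := by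
  have hdeg : d 0 + d 1 + d 2 = 2 := by
    have h := hF hd
    rw [Finsupp.weight_apply, Finsupp.sum_fintype _ _ (by simp)] at h
    simpa [Fin.sum_univ_three] using h
  by_contra! h
  have hcases : d 1 = 0 ∨ d 1 = 1 := by omega
  rcases hcases with h1 | h1
  · refine hd ?_
    have : d = Finsupp.single 0 2 := by
      ext i; fin_cases i <;> simp <;> omega
    rwa [this]
  · refine hd ?_
    have : d = Finsupp.single 0 1 + Finsupp.single 1 1 := by
      ext i; fin_cases i <;> simp <;> omega
    rwa [this]

/-- **Maps of the shape produced by the `r < s` case have small second iterate.**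
Let `F₁ ∈ K[x,y,z]` be homogeneous of degree `2` with no `x²` or `xy` terms, let
`F₂ = z·L` for a linear form `L`, and let `F₃ = c·z²`.  Then `z²` divides each of the three
degree-4 polynomials `F₁(F₁,F₂,F₃)`, `F₂(F₁,F₂,F₃)` and `F₃(F₁,F₂,F₃)`; in particular the
second iterate of `F = [F₁:F₂:F₃]` has degree at most `2`. -/
theorem second_iterate_divisible {K : Type*} [Field K]
    (F₁ F₂ F₃ L : MvPolynomial (Fin 3) K) (c : K)
    (h₁ : F₁.IsHomogeneous 2)
    (hx2 : coeff (Finsupp.single 0 2) F₁ = 0)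
    (hxy : coeff (Finsupp.single 0 1 + Finsupp.single 1 1) F₁ = 0)
    (hL : L.IsHomogeneous 1) (h₂ : F₂ = X 2 * L) (h₃ : F₃ = C c * X 2 ^ 2) :
    (X 2 : MvPolynomial (Fin 3) K) ^ 2 ∣ aeval ![F₁, F₂, F₃] F₁ ∧
    (X 2 : MvPolynomial (Fin 3) K) ^ 2 ∣ aeval ![F₁, F₂, F₃] F₂ ∧
    (X 2 : MvPolynomial (Fin 3) K) ^ 2 ∣ aeval ![F₁, F₂, F₃] F₃ := by
  have hz₃ : (X 2 : MvPolynomial (Fin 3) K) ^ 2 ∣ F₃ := h₃ ▸ dvd_mul_left _ _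
  have hz₂ : (X 2 : MvPolynomial (Fin 3) K) ∣ F₂ := h₂ ▸ dvd_mul_right _ _
  refine ⟨?_, ?_, ?_⟩
  · rw [aeval_def, eval₂_eq']
    refine Finset.dvd_sum fun d hd => Dvd.dvd.mul_left ?_ _
    simp only [Fin.prod_univ_three, Matrix.cons_val]
    rcases exponent_cases h₁ hx2 hxy (mem_support_iff.mp hd) with h | h
    · exact (hz₃.trans (dvd_pow_self F₃ (by omega))).mul_left _
    · exact (((pow_dvd_pow_of_dvd hz₂ 2).trans (pow_dvd_pow F₂ h)).mul_left _).mul_right _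
  · have h := congrArg (aeval ![F₁, F₂, F₃]) h₂
    rw [map_mul, aeval_X] at h
    rw [h]
    exact hz₃.mul_right _
  · have h := congrArg (aeval ![F₁, F₂, F₃]) h₃
    rw [map_mul, map_pow, aeval_X] at h
    rw [h]
    exact (hz₃.trans (dvd_pow_self F₃ two_ne_zero)).mul_left _
end

section
/- Suppose d = 2, so F̄ = (a y z, b x z + P̄(y,z), z²). Then there do not exist linearly independent linear forms ℓ₁, ℓ₂ ∈ K[x,y,z] together with homogeneous polynomials G₁, G₂ ∈ K[u,v] of the same degree, not both zero, such that ℓ₁(F̄₁,F̄₂,F̄₃)·G₂(ℓ₁,ℓ₂) = ℓ₂(F̄₁,F̄₂,F̄₃)·G₁(ℓ₁,ℓ₂) in K[x,y,z]. (That is, the degree-2 Hénon map is not linearly fibered over P¹: it admits no semiconjugation π ∘ F̄ = G ∘ π by a nonconstant linear projection π = [ℓ₁ : ℓ₂] : P² ⇢ P¹.) -/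
open MvPolynomial

/-!
Write `F = (F₁, F₂, F₃)` and let `ℓ₁ = α·w`, `ℓ₂ = β·w`. The cross product `v = α × β` is nonzero
and spans the common kernel of `ℓ₁` and `ℓ₂`; it represents the center of the projection
`π = [ℓ₁ : ℓ₂]`. Since `ℓᵢ(w + v) = ℓᵢ(w)`, the functional equation at `w` and at `w + v` makes both
`(ℓ₁, ℓ₂)(F(w))` and `(ℓ₁, ℓ₂)(F(w + v))` proportional to the same vector `(G₁, G₂)(ℓ₁(w), ℓ₂(w))`,
which is nonzero for generic `w`. Their `2 × 2` determinant equals `det(v, F(w), F(w + v))`, which is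
thus a polynomial in `w` that vanishes identically (`det_eq_zero`).

An explicit computation (`center_eq_zero`) shows that this forces `v = 0`. With `v = (p, q, r)`, the
determinant restricted to `z = 0` is `c₂ y² r² (p - a (y + q))`, so `r = 0`; and for `r = 0` it is
`-z² (z (b p² - a q² + c₁ p q) + 2 c₂ p q y + c₂ p q²)`, so `p q = 0` and `b p² = a q²`.
-/

lemma eval_aeval_eq {K σ τ : Type*} [Field K] (w : τ → K) (f : σ → MvPolynomial τ K)
    (Q : MvPolynomial σ K) : eval w (aeval f Q) = eval (fun i => eval w (f i)) Q := by
  have := comp_aeval_apply (R := K) f (aeval (R := K) w) Q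
  simpa [aeval_eq_eval] using this

/-- A linear form in three variables is given by its vector of coefficients. -/
lemma exists_coeff_of_isHomogeneous_one {K : Type*} [Field K] {ℓ : MvPolynomial (Fin 3) K}
    (h : ℓ.IsHomogeneous 1) :
    ∃ α₀ α₁ α₂ : K, ℓ = C α₀ * X 0 + C α₁ * X 1 + C α₂ * X 2 := by
  have h' : ℓ ∈ homogeneousSubmodule (Fin 3) K 1 := h
  rw [homogeneousSubmodule_one_eq_span_X, Submodule.mem_span_range_iff_exists_fun] at h'
  obtain ⟨c, hc⟩ := h'
  refine ⟨c 0, c 1, c 2, ?_⟩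
  rw [← hc]
  simp [Fin.sum_univ_three, smul_eq_C_mul]

/-- If some `2 × 2` minor of two covectors `α, β` on `K³` is nonzero, then `(α, β) : K³ → K²` is
surjective. -/
lemma exists_preimage {K : Type*} [Field K] (α₀ α₁ α₂ β₀ β₁ β₂ s t : K)
    (h : ¬ (α₁ * β₂ - α₂ * β₁ = 0 ∧ α₂ * β₀ - α₀ * β₂ = 0 ∧ α₀ * β₁ - α₁ * β₀ = 0)) :
    ∃ x y z : K, α₀ * x + α₁ * y + α₂ * z = s ∧ β₀ * x + β₁ * y + β₂ * z = t := by
  -- Cramer's rule, with the coordinate outside the nonzero minor set to `0`.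
  by_cases h0 : α₁ * β₂ - α₂ * β₁ = 0
  · by_cases h1 : α₂ * β₀ - α₀ * β₂ = 0
    · have h2 : α₀ * β₁ - α₁ * β₀ ≠ 0 := fun h2 => h ⟨h0, h1, h2⟩
      obtain ⟨i, hi⟩ := (isUnit_iff_ne_zero.mpr h2).exists_right_inv
      exact ⟨(s * β₁ - t * α₁) * i, (t * α₀ - s * β₀) * i, 0,
        by linear_combination s * hi, by linear_combination t * hi⟩
    · obtain ⟨i, hi⟩ := (isUnit_iff_ne_zero.mpr h1).exists_right_inv
      exact ⟨(t * α₂ - s * β₂) * i, 0, (s * β₀ - t * α₀) * i,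
        by linear_combination s * hi, by linear_combination t * hi⟩
  · obtain ⟨i, hi⟩ := (isUnit_iff_ne_zero.mpr h0).exists_right_inv
    exact ⟨0, (s * β₂ - t * α₂) * i, (t * α₁ - s * β₁) * i,
      by linear_combination s * hi, by linear_combination t * hi⟩

/-- If `det(v, F(w), F(w + v))` vanishes for all `w`, then `v = (p, q, r)` is zero. The determinant
is expanded along `v`. -/
lemma center_eq_zero {K : Type*} [Field K] [CharZero K]
    (a b c₂ c₁ c₀ : K) (ha : a ≠ 0) (hb : b ≠ 0) (hc : c₂ ≠ 0) (f₂ : K → K → K → K)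
    (hf : ∀ x y z, f₂ x y z = b * x * z + c₂ * y ^ 2 + c₁ * y * z + c₀ * z ^ 2) (p q r : K)
    (h : ∀ x y z : K,
      p * (f₂ x y z * (z + r) ^ 2 - z ^ 2 * f₂ (x + p) (y + q) (z + r))
      + q * (z ^ 2 * (a * (y + q) * (z + r)) - a * y * z * (z + r) ^ 2)
      + r * (a * y * z * f₂ (x + p) (y + q) (z + r) - f₂ x y z * (a * (y + q) * (z + r))) = 0) :
    p = 0 ∧ q = 0 ∧ r = 0 := by
  simp only [hf] at h
  have hr : r = 0 := by
    by_contra hr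
    have key : ∀ y : K, y ≠ 0 → p - a * (y + q) = 0 := by
      intro y hy
      have h' : (c₂ * y ^ 2 * r ^ 2) * (p - a * (y + q)) = 0 := by linear_combination h 0 y 0
      exact (mul_eq_zero.mp h').resolve_left (by simp [hc, hy, hr])
    have h1 := key 1 one_ne_zero
    have h2 := key 2 two_ne_zero
    exact ha (by linear_combination h1 - h2)
  subst hr
  have key : ∀ y : K, (b * p ^ 2 - a * q ^ 2 + c₁ * p * q) + 2 * c₂ * p * q * y
      + c₂ * p * q ^ 2 = 0 := by
    intro y
    linear_combination - h 0 y 1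
  have hpq : p * q = 0 := by
    have h' : (2 * c₂) * (p * q) = 0 := by linear_combination key 1 - key 0
    exact (mul_eq_zero.mp h').resolve_left (by simp [hc])
  have hbp : b * p ^ 2 = a * q ^ 2 := by
    linear_combination key 0 - c₁ * hpq - c₂ * q * hpq
  rcases mul_eq_zero.mp hpq with rfl | rfl
  · have : q = 0 := by simpa [ha] using hbp
    simp [this]
  · have : p = 0 := by simpa [hb] using hbp
    simp [this]

/-- The functional equation forces `det(v, F(w), F(w + v))` to vanish identically, where
`v = α × β` spans the common kernel of the two linear forms. Pairing `v` with the cross product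
of `F(w)` and `F(w + v)` gives the `2 × 2` determinant of the values of the forms there. -/
lemma det_eq_zero {K : Type*} [Field K] [Infinite K] (F : Fin 3 → MvPolynomial (Fin 3) K)
    (α₀ α₁ α₂ β₀ β₁ β₂ p q r : K) (hp : p = α₁ * β₂ - α₂ * β₁) (hq : q = α₂ * β₀ - α₀ * β₂)
    (hr : r = α₀ * β₁ - α₁ * β₀) (hv : ¬ (p = 0 ∧ q = 0 ∧ r = 0))
    (G₁ G₂ : MvPolynomial (Fin 2) K) (hG : ¬ (G₁ = 0 ∧ G₂ = 0))
    (h : ∀ x y z : K,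
      (α₀ * eval ![x, y, z] (F 0) + α₁ * eval ![x, y, z] (F 1) + α₂ * eval ![x, y, z] (F 2)) *
        eval ![α₀ * x + α₁ * y + α₂ * z, β₀ * x + β₁ * y + β₂ * z] G₂ =
      (β₀ * eval ![x, y, z] (F 0) + β₁ * eval ![x, y, z] (F 1) + β₂ * eval ![x, y, z] (F 2)) *
        eval ![α₀ * x + α₁ * y + α₂ * z, β₀ * x + β₁ * y + β₂ * z] G₁)
    (x y z : K) :
    p * (eval ![x, y, z] (F 1) * eval ![x + p, y + q, z + r] (F 2)
        - eval ![x, y, z] (F 2) * eval ![x + p, y + q, z + r] (F 1))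
      + q * (eval ![x, y, z] (F 2) * eval ![x + p, y + q, z + r] (F 0)
        - eval ![x, y, z] (F 0) * eval ![x + p, y + q, z + r] (F 2))
      + r * (eval ![x, y, z] (F 0) * eval ![x + p, y + q, z + r] (F 1)
        - eval ![x, y, z] (F 1) * eval ![x + p, y + q, z + r] (F 0)) = 0 := by
  let T : MvPolynomial (Fin 3) K →ₐ[K] MvPolynomial (Fin 3) K :=
    aeval ![X 0 + C p, X 1 + C q, X 2 + C r]
  let ℓ : Fin 2 → MvPolynomial (Fin 3) K :=
    ![C α₀ * X 0 + C α₁ * X 1 + C α₂ * X 2, C β₀ * X 0 + C β₁ * X 1 + C β₂ * X 2]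
  let D : MvPolynomial (Fin 3) K :=
    C p * (F 1 * T (F 2) - F 2 * T (F 1)) + C q * (F 2 * T (F 0) - F 0 * T (F 2))
      + C r * (F 0 * T (F 1) - F 1 * T (F 0))
  have hT : ∀ (x y z : K) (Q : MvPolynomial (Fin 3) K),
      eval ![x, y, z] (T Q) = eval ![x + p, y + q, z + r] Q := by
    intro x y z Q
    rw [eval_aeval_eq]
    congr 2
    ext i
    fin_cases i <;> simp
  have hℓ : ∀ (x y z : K) (Q : MvPolynomial (Fin 2) K), eval ![x, y, z] (aeval ℓ Q) =
      eval ![α₀ * x + α₁ * y + α₂ * z, β₀ * x + β₁ * y + β₂ * z] Q := by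
    intro x y z Q
    rw [eval_aeval_eq]
    congr 2
    ext i
    fin_cases i <;> simp [ℓ]
  have hmul : D * aeval ℓ G₁ = 0 ∧ D * aeval ℓ G₂ = 0 := by
    constructor <;>
    · apply MvPolynomial.funext
      intro w
      obtain ⟨x, y, z, rfl⟩ : ∃ x y z : K, w = ![x, y, z] :=
        ⟨w 0, w 1, w 2, by ext i; fin_cases i <;> rfl⟩
      have e1 := h x y z
      have e2 := h (x + p) (y + q) (z + r)
      -- Translation by `v` does not change the values of the two linear forms.
      rw [show α₀ * (x + p) + α₁ * (y + q) + α₂ * (z + r) = α₀ * x + α₁ * y + α₂ * z by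
          rw [hp, hq, hr]; ring,
        show β₀ * (x + p) + β₁ * (y + q) + β₂ * (z + r) = β₀ * x + β₁ * y + β₂ * z by
          rw [hp, hq, hr]; ring] at e2
      simp only [D, map_mul, map_add, map_sub, hT, hℓ, eval_C, map_zero]
      generalize eval ![x + p, y + q, z + r] (F 0) = A₀' at *
      generalize eval ![x + p, y + q, z + r] (F 1) = A₁' at *
      generalize eval ![x + p, y + q, z + r] (F 2) = A₂' at *
      generalize eval ![x, y, z] (F 0) = A₀ at *
      generalize eval ![x, y, z] (F 1) = A₁ at *
      generalize eval ![x, y, z] (F 2) = A₂ at *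
      subst hp hq hr
      first
      | linear_combination (α₀ * A₀' + α₁ * A₁' + α₂ * A₂') * e1
          - (α₀ * A₀ + α₁ * A₁ + α₂ * A₂) * e2
      | linear_combination (β₀ * A₀' + β₁ * A₁' + β₂ * A₂') * e1
          - (β₀ * A₀ + β₁ * A₁ + β₂ * A₂) * e2
  have hne : ∀ G : MvPolynomial (Fin 2) K, G ≠ 0 → aeval ℓ G ≠ 0 := by
    intro G hG0 h0
    apply hG0
    apply MvPolynomial.funext
    intro w
    obtain ⟨x, y, z, hs, ht⟩ := exists_preimage α₀ α₁ α₂ β₀ β₁ β₂ (w 0) (w 1)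
      (by rwa [← hp, ← hq, ← hr])
    have := hℓ x y z G
    rw [h0, hs, ht] at this
    rw [show w = ![w 0, w 1] by ext i; fin_cases i <;> rfl, ← this]
    simp
  have hD : D = 0 := by
    by_cases hG1 : G₁ = 0
    · exact (mul_eq_zero.mp hmul.2).resolve_right (hne _ fun hG2 => hG ⟨hG1, hG2⟩)
    · exact (mul_eq_zero.mp hmul.1).resolve_right (hne _ hG1)
  have := congrArg (eval ![x, y, z]) hD
  simpa only [D, map_mul, map_add, map_sub, hT, eval_C, map_zero] using this

open MvPolynomial

/-- **Degree-2 Hénon maps are not linearly fibered over `ℙ¹`.**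
Let `F̄ = (a y z, b x z + c₂y² + c₁yz + c₀z², z²)` with `a, b, c₂ ≠ 0` be the homogenization
of a degree-2 planar Hénon map over an algebraically closed field of characteristic `0`.
Then there do not exist linearly independent linear forms `ℓ₁, ℓ₂` and homogeneous
polynomials `G₁, G₂` of the same degree, not both zero, with
`ℓ₁(F̄)·G₂(ℓ₁,ℓ₂) = ℓ₂(F̄)·G₁(ℓ₁,ℓ₂)`; i.e. `F̄` admits no semiconjugation `π ∘ F̄ = G ∘ π`
by a nonconstant linear projection `π = [ℓ₁ : ℓ₂] : ℙ² ⇢ ℙ¹`. -/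
theorem henon_deg2_not_linearly_fibered {K : Type*} [Field K] [IsAlgClosed K] [CharZero K]
    (a b c₂ c₁ c₀ : K) (ha : a ≠ 0) (hb : b ≠ 0) (hc : c₂ ≠ 0)
    (F₁ F₂ F₃ : MvPolynomial (Fin 3) K)
    (hF₁ : F₁ = C a * X 1 * X 2)
    (hF₂ : F₂ = C b * X 0 * X 2 + C c₂ * X 1 ^ 2 + C c₁ * X 1 * X 2 + C c₀ * X 2 ^ 2)
    (hF₃ : F₃ = X 2 ^ 2) :
    ¬ ∃ (ℓ₁ ℓ₂ : MvPolynomial (Fin 3) K) (n : ℕ) (G₁ G₂ : MvPolynomial (Fin 2) K),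
      ℓ₁.IsHomogeneous 1 ∧ ℓ₂.IsHomogeneous 1 ∧ LinearIndependent K ![ℓ₁, ℓ₂] ∧
      G₁.IsHomogeneous n ∧ G₂.IsHomogeneous n ∧ ¬(G₁ = 0 ∧ G₂ = 0) ∧
      aeval ![F₁, F₂, F₃] ℓ₁ * aeval ![ℓ₁, ℓ₂] G₂ =
        aeval ![F₁, F₂, F₃] ℓ₂ * aeval ![ℓ₁, ℓ₂] G₁ := by
  rintro ⟨ℓ₁, ℓ₂, n, G₁, G₂, hℓ₁, hℓ₂, hli, -, -, hG, h⟩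
  obtain ⟨α₀, α₁, α₂, rfl⟩ := exists_coeff_of_isHomogeneous_one hℓ₁
  obtain ⟨β₀, β₁, β₂, rfl⟩ := exists_coeff_of_isHomogeneous_one hℓ₂
  have hv : ¬ (α₁ * β₂ - α₂ * β₁ = 0 ∧ α₂ * β₀ - α₀ * β₂ = 0 ∧ α₀ * β₁ - α₁ * β₀ = 0) := by
    rintro ⟨h0, h1, h2⟩
    rw [LinearIndependent.pair_iff] at hli
    -- Proportional coefficient vectors satisfy `βᵢ α = αᵢ β` for each `i`, so independence of the
    -- forms gives `α = 0`.
    have rel : ∀ s t : K, s * α₀ + t * β₀ = 0 → s * α₁ + t * β₁ = 0 → s * α₂ + t * β₂ = 0 →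
        s = 0 ∧ t = 0 := by
      intro s t e0 e1 e2
      apply hli
      have e0' := congrArg (C (σ := Fin 3)) e0
      have e1' := congrArg (C (σ := Fin 3)) e1
      have e2' := congrArg (C (σ := Fin 3)) e2
      simp only [map_add, map_mul, map_zero] at e0' e1' e2'
      simp only [smul_eq_C_mul]
      linear_combination X 0 * e0' + X 1 * e1' + X 2 * e2'
    have z0 := rel β₀ (-α₀) (by ring) (by linear_combination -h2) (by linear_combination h1)
    have z1 := rel β₁ (-α₁) (by linear_combination h2) (by ring) (by linear_combination -h0)
    have z2 := rel β₂ (-α₂) (by linear_combination -h1) (by linear_combination h0) (by ring)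
    have a0 := neg_eq_zero.mp z0.2
    have a1 := neg_eq_zero.mp z1.2
    have a2 := neg_eq_zero.mp z2.2
    exact one_ne_zero (rel 1 0 (by simp [a0]) (by simp [a1]) (by simp [a2])).1
  have hdet := det_eq_zero ![F₁, F₂, F₃] α₀ α₁ α₂ β₀ β₁ β₂ _ _ _ rfl rfl rfl hv G₁ G₂ hG
    (by
      intro x y z
      have hfun : (fun i => eval ![x, y, z] ((![C α₀ * X 0 + C α₁ * X 1 + C α₂ * X 2,
          C β₀ * X 0 + C β₁ * X 1 + C β₂ * X 2] : Fin 2 → MvPolynomial (Fin 3) K) i)) =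
          ![α₀ * x + α₁ * y + α₂ * z, β₀ * x + β₁ * y + β₂ * z] := by
        ext i
        fin_cases i <;> simp
      have := congrArg (eval ![x, y, z]) h
      rw [map_mul, map_mul, eval_aeval_eq _ _ G₁, eval_aeval_eq _ _ G₂, hfun] at this
      simpa [algebraMap_eq] using this)
  apply hv
  refine center_eq_zero a b c₂ c₁ c₀ ha hb hc _ (fun _ _ _ => rfl) _ _ _ ?_
  intro x y z
  have := hdet x y z
  simp [hF₁, hF₂, hF₃] at this
  linear_combination this
end
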